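/- arXiv:0712.1639 — 2 statements merged into one kernel-verified Lean document; each statement's English description precedes it below -/
import Mathlib

section
/- For integers k ≥ 1 and d ≥ 1 and each ω ∈ {•,★}, the multiple zeta value ζ^ω_d({2k}^d) = (-1)^{kd} · 2^{2kd} · [ Σ_{μ ⊢ d} (ε^ω_μ / z_μ) · ((-1)^{ℓ(μ)} / 2^{ℓ(μ)}) · ∏_{j=1}^{ℓ(μ)} B_{2kμ_j}/(2kμ_j)! ] · π^{2kd}, where the sum is over all partitions μ of d. In particular ζ^ω_d({2k}^d) is a rational multiple of π^{2kd}. -/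
open Complex Filter Finset Topology

noncomputable section

/-- `z_μ = ∏_i i^{m_i(μ)} m_i(μ)!` for a partition `μ`. -/
def zPart {d : ℕ} (μ : Nat.Partition d) : ℕ :=
  ∏ i ∈ μ.parts.toFinset, i ^ μ.parts.count i * (μ.parts.count i).factorial

/-- Truncated strict multiple zeta sum `∑_{0<m_1<⋯<m_d≤M} ∏_j m_j^{-κ}`. -/
def mzvSumLt (d κ M : ℕ) : ℂ :=
  ∑ m ∈ (Fintype.piFinset fun _ : Fin d => Finset.Icc 1 M).filter
      (fun m => ∀ i j : Fin d, i < j → m i < m j),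
    ∏ j, 1 / (m j : ℂ) ^ κ

/-- Truncated non-strict multiple zeta sum `∑_{0<m_1≤⋯≤m_d≤M} ∏_j m_j^{-κ}`. -/
def mzvSumLe (d κ M : ℕ) : ℂ :=
  ∑ m ∈ (Fintype.piFinset fun _ : Fin d => Finset.Icc 1 M).filter
      (fun m => ∀ i j : Fin d, i < j → m i ≤ m j),
    ∏ j, 1 / (m j : ℂ) ^ κ

/-- The partition sum appearing in formula (2.7) for `ζ^ω_d({2k}^d)`. -/
def mzvEvalSum (k d : ℕ) (strict : Bool) : ℂ :=
  ∑ μ : Nat.Partition d,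
    ((if strict then (-1 : ℂ) ^ ((d : ℤ) - μ.parts.card) else 1) / (zPart μ : ℂ)) *
    ((-1 : ℂ) ^ μ.parts.card / 2 ^ μ.parts.card) *
    (μ.parts.map fun pj =>
      (bernoulli' (2 * k * pj) : ℂ) / ((2 * k * pj).factorial : ℂ)).prod

/-!
The truncated strict and weak sums are the elementary and complete homogeneous symmetric polynomials
in the numbers `x n = 1 / n ^ (2 * k)`, with generating series `∏ (1 + x n X)` and
`∏ (1 - x n X)⁻¹`. The logarithmic derivatives of these series have power sums as coefficients, so
both satisfy Newton's recursion. Cycle indices satisfy the same recursion, because removing a part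
`r` from `μ ⊢ n` divides `z_μ` by `r * m_r(μ)` and these factors add up to `n`; hence the truncated
sums are cycle indices of signed truncated power sums. In the limit the power sums become `ζ(2kr)`,
and Euler's evaluation writes `ζ(2kr)` as a rational number times the `r`-th power of a constant,
which homogeneity of the cycle index pulls out as a `d`-th power.
-/

section Partitions

lemma zPart_eq_prod_of_subset {d : ℕ} (μ : Nat.Partition d) {t : Finset ℕ}
    (h : μ.parts.toFinset ⊆ t) :
    zPart μ = ∏ i ∈ t, i ^ μ.parts.count i * (μ.parts.count i).factorial := by
  refine Finset.prod_subset h fun i _ hi => ?_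
  simp [Multiset.count_eq_zero.2 (Multiset.mem_toFinset.not.1 hi)]

lemma zPart_of_parts_eq_cons {m n r : ℕ} {μ : Nat.Partition m} {ν : Nat.Partition n}
    (h : μ.parts = r ::ₘ ν.parts) : zPart μ = μ.parts.count r * r * zPart ν := by
  rw [zPart_eq_prod_of_subset μ (t := insert r ν.parts.toFinset) (by simp [h]),
    zPart_eq_prod_of_subset ν (Finset.subset_insert r _),
    ← Finset.mul_prod_erase _ _ (Finset.mem_insert_self r _),
    ← Finset.mul_prod_erase _ _ (Finset.mem_insert_self r _), ← mul_assoc]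
  congr 1
  · rw [h, Multiset.count_cons_self, Nat.factorial_succ]
    ring
  · refine Finset.prod_congr rfl fun i hi => ?_
    rw [h, Multiset.count_cons_of_ne (Finset.ne_of_mem_erase hi)]

lemma sum_range_count_parts_mul {n : ℕ} (μ : Nat.Partition n) :
    ∑ i ∈ range n, μ.parts.count (i + 1) * (i + 1) = n := by
  have hparts : μ.parts.toFinset ⊆ range (n + 1) := fun i hi =>
    mem_range_succ_iff.2 (μ.le_of_mem_parts (Multiset.mem_toFinset.1 hi))
  have hsum := Finset.sum_multiset_count_of_subset μ.parts _ hparts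
  rw [μ.parts_sum, Finset.sum_range_succ'] at hsum
  simpa using hsum.symm

lemma multiset_prod_map_pow_eq_pow_sum {M : Type*} [CommMonoid M] (c : M) (s : Multiset ℕ) :
    (s.map (c ^ ·)).prod = c ^ s.sum := by
  induction s using Multiset.induction_on with
  | empty => simp
  | cons r s ih => simp [ih, pow_add]

end Partitions

section CycleIndex

variable {K : Type*} [Field K]

/-- The cycle index `∑_{μ ⊢ d} (∏_j a_{μ_j}) / z_μ` of the symmetric group on `d` letters, with the
variables `a_1, a_2, …` read off a sequence `a` whose value at `0` does not enter. -/
def cycleIndex (a : ℕ → K) (d : ℕ) : K :=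
  ∑ μ : Nat.Partition d, (μ.parts.map a).prod / (zPart μ : K)

lemma cycleIndex_zero (a : ℕ → K) : cycleIndex a 0 = 1 := by
  simp [cycleIndex, zPart]

lemma cycleIndex_congr {a b : ℕ → K} (h : ∀ r, 0 < r → a r = b r) (d : ℕ) :
    cycleIndex a d = cycleIndex b d :=
  Finset.sum_congr rfl fun μ _ => by
    rw [Multiset.map_congr rfl fun r hr => h r (μ.parts_pos hr)]

lemma cycleIndex_pow_mul (c : K) (a : ℕ → K) (d : ℕ) :
    cycleIndex (fun r => c ^ r * a r) d = c ^ d * cycleIndex a d := by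
  simp only [cycleIndex, Finset.mul_sum]
  refine Finset.sum_congr rfl fun μ _ => ?_
  rw [Multiset.prod_map_mul, multiset_prod_map_pow_eq_pow_sum, μ.parts_sum, mul_div_assoc]

lemma cycleIndex_neg_neg_one_pow_mul (a : ℕ → K) (d : ℕ) :
    cycleIndex (fun r => -((-1) ^ r * a r)) d =
      ∑ μ : Nat.Partition d,
        (-1) ^ ((d : ℤ) - μ.parts.card) * ((μ.parts.map a).prod / (zPart μ : K)) := by
  simp_rw [← mul_neg, ← neg_one_mul (a _)]
  rw [cycleIndex_pow_mul, cycleIndex, Finset.mul_sum]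
  refine Finset.sum_congr rfl fun μ _ => ?_
  rw [Multiset.prod_map_mul, Multiset.map_const', Multiset.prod_replicate, mul_div_assoc,
    ← mul_assoc, zpow_sub₀ (neg_ne_zero.2 one_ne_zero), zpow_natCast, zpow_natCast,
    div_eq_mul_inv ((-1) ^ d), ← inv_pow, inv_neg_one]

lemma map_cycleIndex {L : Type*} [Field L] (φ : K →+* L) (a : ℕ → K) (d : ℕ) :
    φ (cycleIndex a d) = cycleIndex (fun r => φ (a r)) d := by
  simp [cycleIndex, map_multiset_prod]

lemma tendsto_cycleIndex {ι : Type*} [TopologicalSpace K] [IsTopologicalSemiring K]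
    {l : Filter ι} {a : ι → ℕ → K} {b : ℕ → K}
    (h : ∀ r, 0 < r → Tendsto (fun i => a i r) l (𝓝 (b r))) (d : ℕ) :
    Tendsto (fun i => cycleIndex (a i) d) l (𝓝 (cycleIndex b d)) :=
  tendsto_finsetSum _ fun μ _ =>
    (tendsto_multiset_prod _ fun r hr => h r (μ.parts_pos hr)).div_const _

variable [CharZero K]

lemma mul_cycleIndex_sub (a : ℕ → K) {n r : ℕ} (hr : 1 ≤ r) (hrn : r ≤ n) :
    a r * cycleIndex a (n - r) =
      ∑ μ : Nat.Partition n,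
        ((μ.parts.count r * r : ℕ) : K) * ((μ.parts.map a).prod / (zPart μ : K)) := by
  let e := Nat.Partition.partitionWithPartEquiv hr hrn
  let w (μ : Nat.Partition n) : K :=
    ((μ.parts.count r * r : ℕ) : K) * ((μ.parts.map a).prod / (zPart μ : K))
  have hw (μ : {μ : Nat.Partition n // r ∈ μ.parts}) :
      a r * (((e μ).parts.map a).prod / (zPart (e μ) : K)) = w μ.1 := by
    have hcons : μ.1.parts = r ::ₘ (e μ).parts := by simp [e, Multiset.cons_erase μ.2]
    have hcount : ((μ.1.parts.count r * r : ℕ) : K) ≠ 0 :=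
      Nat.cast_ne_zero.2 (mul_pos (Multiset.count_pos.2 μ.2) hr).ne'
    simp only [w]
    rw [zPart_of_parts_eq_cons hcons, congrArg (Multiset.map a) hcons, Multiset.map_cons,
      Multiset.prod_cons, Nat.cast_mul (_ * _), ← mul_div_assoc, ← mul_div_assoc,
      mul_div_mul_left _ _ hcount]
  calc a r * cycleIndex a (n - r)
      = ∑ μ : {μ : Nat.Partition n // r ∈ μ.parts}, w μ.1 := by
        rw [cycleIndex, Finset.mul_sum, ← e.sum_comp]
        exact Finset.sum_congr rfl fun μ _ => hw μ
    _ = ∑ μ : Nat.Partition n with r ∈ μ.parts, w μ :=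
        (Finset.sum_subtype _ (by simp) w).symm
    _ = ∑ μ : Nat.Partition n, w μ := by
        refine Finset.sum_filter_of_ne fun μ _ hμ => ?_
        contrapose! hμ
        simp [w, Multiset.count_eq_zero.2 hμ]

lemma natCast_mul_cycleIndex (a : ℕ → K) (n : ℕ) :
    n * cycleIndex a n = ∑ i ∈ range n, a (i + 1) * cycleIndex a (n - (i + 1)) := by
  rw [Finset.sum_congr rfl fun i hi => mul_cycleIndex_sub a i.succ_pos (mem_range.1 hi),
    Finset.sum_comm, cycleIndex, Finset.mul_sum]
  refine Finset.sum_congr rfl fun μ _ => ?_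
  rw [← Finset.sum_mul, ← Nat.cast_sum, sum_range_count_parts_mul]

end CycleIndex

section LogarithmicDerivative

open PowerSeries

variable {R : Type*} [CommRing R]

lemma eq_of_derivative_eq_mul [IsAddTorsionFree R] {F G P : R⟦X⟧} (hF : d⁄dX R F = P * F)
    (hG : d⁄dX R G = P * G) (h0 : constantCoeff F = constantCoeff G) : F = G := by
  ext n
  induction n using Nat.strong_induction_on with
  | _ n ih =>
    cases n with
    | zero => simpa using h0
    | succ n =>
      have hcoeff : coeff n (P * F) = coeff n (P * G) := by
        rw [coeff_mul, coeff_mul]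
        refine Finset.sum_congr rfl fun p hp => ?_
        rw [ih p.2 (Nat.lt_succ_of_le (Finset.HasAntidiagonal.antidiagonal.snd_le hp))]
      rw [← hF, ← hG, coeff_derivative, coeff_derivative, ← Nat.cast_succ, mul_comm,
        ← nsmul_eq_mul, mul_comm, ← nsmul_eq_mul] at hcoeff
      exact nsmul_right_injective n.succ_ne_zero hcoeff

lemma derivative_eq_neg_mul_of_mul_eq_one {F G P : R⟦X⟧} (hFG : F * G = 1)
    (hG : d⁄dX R G = P * G) : d⁄dX R F = -P * F := by
  have hleibniz := congrArg (d⁄dX R) hFG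
  rw [Derivation.leibniz, hG, derivative_one, smul_eq_mul, smul_eq_mul] at hleibniz
  linear_combination F * hleibniz - (d⁄dX R F + P * F) * hFG

-- The logarithmic derivative of `1 + c X` is `c / (1 + c X)`, here cleared of the denominator.
lemma C_eq_mk_mul_one_add_C_mul_X (c : R) :
    C c = PowerSeries.mk (fun r => -(-c) ^ (r + 1)) * (1 + C c * X) := by
  ext (_ | n)
  · simp
  · simp only [mul_add, mul_one, mul_left_comm _ (C c), map_add, coeff_C_mul, coeff_succ_mul_X,
      coeff_mk, coeff_C, n.succ_ne_zero, if_false]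
    ring

lemma derivative_prod_one_add_C_mul_X {ι : Type*} (s : Finset ι) (x : ι → R) :
    d⁄dX R (∏ n ∈ s, (1 + C (x n) * X)) =
      PowerSeries.mk (fun r => -∑ n ∈ s, (-x n) ^ (r + 1)) * ∏ n ∈ s, (1 + C (x n) * X) := by
  classical
  induction s using Finset.induction_on with
  | empty =>
    have hzero : (PowerSeries.mk fun _ => 0 : R⟦X⟧) = 0 := rfl
    simp [hzero]
  | insert a s ha ih =>
    have hfactor : d⁄dX R (1 + C (x a) * X) =
        PowerSeries.mk (fun r => -(-x a) ^ (r + 1)) * (1 + C (x a) * X) := by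
      rw [← C_eq_mk_mul_one_add_C_mul_X]
      simp
    have hadd : PowerSeries.mk (fun r => -∑ n ∈ insert a s, (-x n) ^ (r + 1)) =
        PowerSeries.mk (fun r => -(-x a) ^ (r + 1)) +
          PowerSeries.mk (fun r => -∑ n ∈ s, (-x n) ^ (r + 1)) := by
      ext r
      simp [Finset.sum_insert ha, add_comm]
    rw [Finset.prod_insert ha, Derivation.leibniz, ih, hfactor, hadd, smul_eq_mul, smul_eq_mul]
    ring

variable {K : Type*} [Field K] [CharZero K]

lemma derivative_mk_cycleIndex (a : ℕ → K) :
    d⁄dX K (PowerSeries.mk (cycleIndex a)) =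
      PowerSeries.mk (fun r => a (r + 1)) * PowerSeries.mk (cycleIndex a) := by
  ext n
  have hnewton := natCast_mul_cycleIndex a (n + 1)
  simp only [Nat.add_sub_add_right] at hnewton
  rw [coeff_derivative, coeff_mk, mul_comm, ← Nat.cast_succ, hnewton, coeff_mul,
    Nat.sum_antidiagonal_eq_sum_range_succ_mk]
  simp

lemma eq_mk_cycleIndex_of_derivative_eq_mul {F : K⟦X⟧} {a : ℕ → K} (h0 : constantCoeff F = 1)
    (hF : d⁄dX K F = PowerSeries.mk (fun r => a (r + 1)) * F) :
    F = PowerSeries.mk (cycleIndex a) :=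
  eq_of_derivative_eq_mul hF (derivative_mk_cycleIndex a) (by simp [h0, cycleIndex_zero])

end LogarithmicDerivative

section ChainSum

open PowerSeries

/-- The sum of `∏ j, x (m j)` over the tuples `m : Fin d → s` with `r (m i) (m j)` for all `i < j`.
For `r = (· < ·)` it is an elementary symmetric polynomial in the `x n`, and for `r = (· ≤ ·)` a
complete homogeneous one. -/
def chainSum {α R : Type*} [CommSemiring R] (r : α → α → Prop) [DecidableRel r] (s : Finset α)
    (x : α → R) (d : ℕ) : R :=
  ∑ m ∈ (Fintype.piFinset fun _ : Fin d => s).filter (fun m => ∀ i j, i < j → r (m i) (m j)),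
    ∏ j, x (m j)

section Recursion

variable {α R : Type*} [CommSemiring R] (r : α → α → Prop) [DecidableRel r] (s : Finset α)
  (x : α → R)

lemma chainSum_zero : chainSum r s x 0 = 1 := by
  simp [chainSum]

lemma chainSum_succ (d : ℕ) :
    chainSum r s x (d + 1) = ∑ a ∈ s, x a * chainSum r (s.filter (r · a)) x d := by
  simp only [chainSum, Finset.mul_sum]
  rw [Finset.sum_sigma']
  refine Finset.sum_nbij' (fun m => ⟨m (Fin.last d), Fin.init m⟩)
    (fun p => Fin.snoc (α := fun _ => α) p.2 p.1) ?_ ?_ ?_ ?_ ?_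
  · simp +contextual [Fin.forall_fin_succ', Fin.init, Fin.castSucc_lt_last]
  · simp +contextual [Fin.forall_fin_succ', Fin.castSucc_lt_last, (Fin.le_last _).not_gt]
  · simp
  · simp
  · simp [Fin.prod_univ_castSucc, Fin.init, mul_comm]

lemma mk_chainSum_empty : PowerSeries.mk (chainSum r ∅ x) = 1 := by
  ext (_ | d)
  · simp [chainSum_zero]
  · simp [chainSum_succ, coeff_one]

end Recursion

variable {α : Type*} [LinearOrder α] {R : Type*}

section CommSemiring

variable [CommSemiring R] {a : α} {s : Finset α}

lemma chainSum_lt_insert (h : ∀ b ∈ s, b < a) (x : α → R) (d : ℕ) :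
    chainSum (· < ·) (insert a s) x (d + 1) =
      chainSum (· < ·) s x (d + 1) + x a * chainSum (· < ·) s x d := by
  rw [chainSum_succ, Finset.sum_insert fun ha => (h a ha).false, chainSum_succ, add_comm]
  have hlast : (insert a s).filter (· < a) = s := by
    ext b; grind
  congr 1
  · refine Finset.sum_congr rfl fun b hb => ?_
    rw [Finset.filter_insert, if_neg (h b hb).not_gt]
  · rw [hlast]

lemma chainSum_le_insert (h : ∀ b ∈ s, b < a) (x : α → R) (d : ℕ) :
    chainSum (· ≤ ·) (insert a s) x (d + 1) =
      chainSum (· ≤ ·) s x (d + 1) + x a * chainSum (· ≤ ·) (insert a s) x d := by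
  rw [chainSum_succ, Finset.sum_insert fun ha => (h a ha).false, chainSum_succ, add_comm]
  have hlast : (insert a s).filter (· ≤ a) = insert a s := by
    ext b; grind
  congr 1
  · refine Finset.sum_congr rfl fun b hb => ?_
    rw [Finset.filter_insert, if_neg (h b hb).not_ge]
  · rw [hlast]

end CommSemiring

lemma mk_chainSum_lt [CommSemiring R] (s : Finset α) (x : α → R) :
    PowerSeries.mk (chainSum (· < ·) s x) = ∏ n ∈ s, (1 + C (x n) * X) := by
  induction s using Finset.induction_on_max with
  | empty => simp [mk_chainSum_empty]
  | insert a s h ih =>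
    rw [Finset.prod_insert fun ha => (h a ha).false, ← ih]
    ext (_ | d)
    · simp [chainSum_zero]
    · simp [chainSum_lt_insert h, add_mul, mul_assoc, coeff_succ_X_mul]

lemma mk_chainSum_le_mul_prod [CommRing R] (s : Finset α) (x : α → R) :
    PowerSeries.mk (chainSum (· ≤ ·) s x) * ∏ n ∈ s, (1 + C (-x n) * X) = 1 := by
  induction s using Finset.induction_on_max with
  | empty => simp [mk_chainSum_empty]
  | insert a s h ih =>
    have hinsert : PowerSeries.mk (chainSum (· ≤ ·) (insert a s) x) * (1 + C (-x a) * X) =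
        PowerSeries.mk (chainSum (· ≤ ·) s x) := by
      ext (_ | d)
      · simp [chainSum_zero]
      · simp [chainSum_le_insert h, mul_add, mul_left_comm _ (C (x a)), coeff_succ_mul_X]
    rw [Finset.prod_insert fun ha => (h a ha).false, ← mul_assoc, hinsert, ih]

variable {K : Type*} [Field K] [CharZero K]

theorem chainSum_lt_eq_cycleIndex (s : Finset α) (x : α → K) (d : ℕ) :
    chainSum (· < ·) s x d = cycleIndex (fun r => -((-1) ^ r * ∑ n ∈ s, x n ^ r)) d := by
  have hseries : PowerSeries.mk (chainSum (· < ·) s x) =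
      PowerSeries.mk (cycleIndex fun r => -∑ n ∈ s, (-x n) ^ r) :=
    eq_mk_cycleIndex_of_derivative_eq_mul (by simp [chainSum_zero])
      (by rw [mk_chainSum_lt, derivative_prod_one_add_C_mul_X])
  simp_rw [Finset.mul_sum, ← neg_pow]
  simpa using congrArg (coeff d) hseries

theorem chainSum_le_eq_cycleIndex (s : Finset α) (x : α → K) (d : ℕ) :
    chainSum (· ≤ ·) s x d = cycleIndex (fun r => ∑ n ∈ s, x n ^ r) d := by
  have hseries : PowerSeries.mk (chainSum (· ≤ ·) s x) =
      PowerSeries.mk (cycleIndex fun r => ∑ n ∈ s, x n ^ r) := by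
    refine eq_mk_cycleIndex_of_derivative_eq_mul (by simp [chainSum_zero]) ?_
    rw [derivative_eq_neg_mul_of_mul_eq_one (mk_chainSum_le_mul_prod s x)
      (derivative_prod_one_add_C_mul_X s fun n => -x n)]
    congr 1
    ext r
    simp
  simpa using congrArg (coeff d) hseries

end ChainSum

section ZetaValues

lemma tendsto_sum_Icc_one_div_pow {s : ℕ} (hs : 1 < s) :
    Tendsto (fun M : ℕ => ∑ n ∈ Icc 1 M, 1 / (n : ℂ) ^ s) atTop (𝓝 (riemannZeta s)) := by
  have hsummable : Summable fun n : ℕ => 1 / (n : ℂ) ^ s := by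
    simpa using Complex.summable_one_div_nat_cpow (p := s).2 (by simpa using hs)
  have hlim := (tendsto_add_atTop_iff_nat 1).2 hsummable.hasSum.tendsto_sum_nat
  rw [← zeta_nat_eq_tsum_of_gt_one hs] at hlim
  refine hlim.congr fun M => ?_
  rw [Finset.sum_range_eq_add_Ico _ M.add_one_pos, Finset.Ico_add_one_right_eq_Icc]
  simp [(zero_lt_one.trans hs).ne']

lemma tendsto_sum_Icc_one_div_pow_pow {κ : ℕ} (hκ : 1 < κ) {r : ℕ} (hr : 0 < r) :
    Tendsto (fun M : ℕ => ∑ n ∈ Icc 1 M, (1 / (n : ℂ) ^ κ) ^ r) atTop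
      (𝓝 (riemannZeta (κ * r : ℕ))) := by
  simp_rw [one_div_pow, ← pow_mul]
  exact tendsto_sum_Icc_one_div_pow (hκ.trans_le (Nat.le_mul_of_pos_right κ hr))

theorem tendsto_mzvSumLt {κ : ℕ} (hκ : 1 < κ) (d : ℕ) :
    Tendsto (mzvSumLt d κ) atTop
      (𝓝 (cycleIndex (fun r => -((-1) ^ r * riemannZeta (κ * r : ℕ))) d)) := by
  refine (tendsto_cycleIndex (fun r hr => ?_) d).congr fun M =>
    (chainSum_lt_eq_cycleIndex (Icc 1 M) (fun n => 1 / (n : ℂ) ^ κ) d).symm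
  exact ((tendsto_sum_Icc_one_div_pow_pow hκ hr).const_mul _).neg

theorem tendsto_mzvSumLe {κ : ℕ} (hκ : 1 < κ) (d : ℕ) :
    Tendsto (mzvSumLe d κ) atTop (𝓝 (cycleIndex (fun r => riemannZeta (κ * r : ℕ)) d)) :=
  (tendsto_cycleIndex (fun _ hr => tendsto_sum_Icc_one_div_pow_pow hκ hr) d).congr fun M =>
    (chainSum_le_eq_cycleIndex (Icc 1 M) (fun n => 1 / (n : ℂ) ^ κ) d).symm

/-- The rational number `q` in Euler's evaluation `ζ(2kr) = ((-1)^k 2^{2k} π^{2k})^r q`, for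
`k, r ≥ 1`. -/
def zetaEvenCoeff (k r : ℕ) : ℚ :=
  -1 / 2 * (bernoulli' (2 * k * r) / (2 * k * r).factorial)

lemma riemannZeta_two_mul_mul {k r : ℕ} (hk : 0 < k) (hr : 0 < r) :
    riemannZeta (2 * k * r : ℕ) =
      ((-1) ^ k * 2 ^ (2 * k) * (Real.pi : ℂ) ^ (2 * k)) ^ r * zetaEvenCoeff k r := by
  have hkr : k * r ≠ 0 := (mul_pos hk hr).ne'
  have hbernoulli : bernoulli' (2 * (k * r)) = bernoulli (2 * (k * r)) :=
    (bernoulli_eq_bernoulli'_of_ne_one (by lia)).symm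
  have htwo : (2 : ℂ) ^ (2 * (k * r)) = 2 ^ (2 * (k * r) - 1) * 2 :=
    (pow_sub_one_mul (by lia) 2).symm
  have hzeta := riemannZeta_two_mul_nat hkr
  rw [mul_assoc, Nat.cast_mul, Nat.cast_two, hzeta, zetaEvenCoeff, mul_assoc 2 k r, hbernoulli,
    mul_pow, mul_pow, ← pow_mul, ← pow_mul, ← pow_mul, mul_assoc 2 k r, htwo]
  push_cast
  ring

lemma prod_map_zetaEvenCoeff (k : ℕ) (s : Multiset ℕ) :
    (s.map fun r => (zetaEvenCoeff k r : ℂ)).prod =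
      (-1) ^ s.card / 2 ^ s.card *
        (s.map fun r => (bernoulli' (2 * k * r) : ℂ) / ((2 * k * r).factorial : ℂ)).prod := by
  simp only [zetaEvenCoeff, Rat.cast_mul, Rat.cast_div, Rat.cast_neg, Rat.cast_one,
    Rat.cast_ofNat, Rat.cast_natCast, Multiset.prod_map_mul, Multiset.map_const',
    Multiset.prod_replicate, div_pow]

lemma mzvEvalSum_false (k d : ℕ) :
    mzvEvalSum k d false = cycleIndex (fun r => (zetaEvenCoeff k r : ℂ)) d := by
  rw [mzvEvalSum, cycleIndex]
  refine Finset.sum_congr rfl fun μ _ => ?_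
  rw [prod_map_zetaEvenCoeff, if_neg Bool.false_ne_true]
  ring

lemma mzvEvalSum_true (k d : ℕ) :
    mzvEvalSum k d true = cycleIndex (fun r => -((-1) ^ r * (zetaEvenCoeff k r : ℂ))) d := by
  rw [mzvEvalSum, cycleIndex_neg_neg_one_pow_mul]
  refine Finset.sum_congr rfl fun μ _ => ?_
  rw [prod_map_zetaEvenCoeff, if_pos rfl]
  ring

lemma exists_mzvEvalSum_eq_ratCast (k d : ℕ) (strict : Bool) :
    ∃ q : ℚ, mzvEvalSum k d strict = q := by
  cases strict
  case false =>
    refine ⟨cycleIndex (zetaEvenCoeff k) d, ?_⟩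
    rw [mzvEvalSum_false, ← eq_ratCast (Rat.castHom ℂ), map_cycleIndex]
    simp
  case true =>
    refine ⟨cycleIndex (fun r => -((-1) ^ r * zetaEvenCoeff k r)) d, ?_⟩
    rw [mzvEvalSum_true, ← eq_ratCast (Rat.castHom ℂ), map_cycleIndex]
    simp

theorem tendsto_mzvSumLt_two_mul {k : ℕ} (hk : 0 < k) (d : ℕ) :
    Tendsto (mzvSumLt d (2 * k)) atTop
      (𝓝 (((-1) ^ k * 2 ^ (2 * k) * (Real.pi : ℂ) ^ (2 * k)) ^ d * mzvEvalSum k d true)) := by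
  rw [mzvEvalSum_true, ← cycleIndex_pow_mul]
  convert tendsto_mzvSumLt (by lia : 1 < 2 * k) d using 2
  refine cycleIndex_congr (fun r hr => ?_) d
  rw [riemannZeta_two_mul_mul hk hr]
  ring

theorem tendsto_mzvSumLe_two_mul {k : ℕ} (hk : 0 < k) (d : ℕ) :
    Tendsto (mzvSumLe d (2 * k)) atTop
      (𝓝 (((-1) ^ k * 2 ^ (2 * k) * (Real.pi : ℂ) ^ (2 * k)) ^ d * mzvEvalSum k d false)) := by
  rw [mzvEvalSum_false, ← cycleIndex_pow_mul,
    ← cycleIndex_congr fun r hr => riemannZeta_two_mul_mul hk hr]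
  exact tendsto_mzvSumLe (by lia : 1 < 2 * k) d

end ZetaValues

/-- **Formula (2.7)**: for integers `k ≥ 1`, `d ≥ 1` and `ω ∈ {•,★}`,
`ζ^ω_d({2k}^d) = (-1)^{kd} 2^{2kd}
  [Σ_{μ ⊢ d} (ε^ω_μ/z_μ) ((-1)^{ℓ(μ)}/2^{ℓ(μ)}) ∏_j B_{2kμ_j}/(2kμ_j)!] π^{2kd}`,
and in particular this value is a rational multiple of `π^{2kd}`.
The multiple zeta value is expressed as the limit of its truncations. -/
theorem multiple_zeta_value_even
    (k d : ℕ) (hk : 1 ≤ k) (hd : 1 ≤ d) :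
    (Tendsto (mzvSumLt d (2 * k)) atTop
        (𝓝 ((-1 : ℂ) ^ (k * d) * 2 ^ (2 * k * d) * mzvEvalSum k d true *
          (Real.pi : ℂ) ^ (2 * k * d))) ∧
      ∃ q : ℚ, (-1 : ℂ) ^ (k * d) * 2 ^ (2 * k * d) * mzvEvalSum k d true *
          (Real.pi : ℂ) ^ (2 * k * d) = (q : ℂ) * (Real.pi : ℂ) ^ (2 * k * d)) ∧
    (Tendsto (mzvSumLe d (2 * k)) atTop
        (𝓝 ((-1 : ℂ) ^ (k * d) * 2 ^ (2 * k * d) * mzvEvalSum k d false *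
          (Real.pi : ℂ) ^ (2 * k * d))) ∧
      ∃ q : ℚ, (-1 : ℂ) ^ (k * d) * 2 ^ (2 * k * d) * mzvEvalSum k d false *
          (Real.pi : ℂ) ^ (2 * k * d) = (q : ℂ) * (Real.pi : ℂ) ^ (2 * k * d)) := by
  have hfactor (z : ℂ) : ((-1) ^ k * 2 ^ (2 * k) * (Real.pi : ℂ) ^ (2 * k)) ^ d * z =
      (-1) ^ (k * d) * 2 ^ (2 * k * d) * z * (Real.pi : ℂ) ^ (2 * k * d) := by
    rw [mul_pow, mul_pow, ← pow_mul, ← pow_mul, ← pow_mul]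
    ring
  have hrat (strict : Bool) : ∃ q : ℚ, (-1 : ℂ) ^ (k * d) * 2 ^ (2 * k * d) *
      mzvEvalSum k d strict * (Real.pi : ℂ) ^ (2 * k * d) =
        (q : ℂ) * (Real.pi : ℂ) ^ (2 * k * d) := by
    obtain ⟨q, hq⟩ := exists_mzvEvalSum_eq_ratCast k d strict
    exact ⟨(-1) ^ (k * d) * 2 ^ (2 * k * d) * q, by rw [hq]; push_cast; rfl⟩
  exact ⟨⟨hfactor _ ▸ tendsto_mzvSumLt_two_mul hk d, hrat true⟩,
    ⟨hfactor _ ▸ tendsto_mzvSumLe_two_mul hk d, hrat false⟩⟩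

end
end

section
/- Let k ≥ 1 and d ≥ 1 be integers and ζ_k := e^{2πi/k}. Define, for n ≥ 0, A^•_{2n}(2k,1) := Σ_{n_1+⋯+n_k = n, n_i ≥ 0} multinomial(2n+k; 2n_1+1, …, 2n_k+1) · ζ_k^{Σ_{l=1}^{k} l·n_l} and A^★_{2n}(2k,1) := Σ_{n_1+⋯+n_k = n, n_i ≥ 0} multinomial(2n; 2n_1, …, 2n_k) · (∏_{l=1}^{k} (2^{2n_l} − 2) B_{2n_l}) · ζ_k^{Σ_{l=1}^{k} l·n_l}. Then: (a) A^•_{2n}(2k,1) = 0 and A^★_{2n}(2k,1) = 0 whenever k does not divide n; (b) ζ^•_d({2k}^d) = (−1)^{d} (−1)^{kd} A^•_{2kd}(2k,1) π^{2kd} / ((2d+1)k)!; (c) ζ^★_d({2k}^d) = (−1)^{k(d−1)} A^★_{2kd}(2k,1) π^{2kd} / (2kd)!. -/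
open Complex Filter Finset Topology

noncomputable section

/-- `A^•_{2n}(2k,1) = Σ_{n_1+⋯+n_k=n} multinomial(2n+k; 2n_1+1,…,2n_k+1)
ζ_k^{Σ_l l n_l}`. -/
def AbulletOne (k n : ℕ) : ℂ :=
  ∑ f ∈ Finset.Nat.antidiagonalTuple k n,
    (Nat.multinomial Finset.univ (fun i => 2 * f i + 1) : ℂ) *
      Complex.exp (2 * Real.pi * Complex.I / k) ^ (∑ i : Fin k, ((i : ℕ) + 1) * f i)

/-- `A^★_{2n}(2k,1) = Σ_{n_1+⋯+n_k=n} multinomial(2n; 2n_1,…,2n_k)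
(∏_l (2^{2n_l}-2) B_{2n_l}) ζ_k^{Σ_l l n_l}`. -/
def AstarOne (k n : ℕ) : ℂ :=
  ∑ f ∈ Finset.Nat.antidiagonalTuple k n,
    (Nat.multinomial Finset.univ (fun i => 2 * f i) : ℂ) *
      (∏ i : Fin k, ((2 : ℂ) ^ (2 * f i) - 2) * (bernoulli' (2 * f i) : ℂ)) *
      Complex.exp (2 * Real.pi * Complex.I / k) ^ (∑ i : Fin k, ((i : ℕ) + 1) * f i)

/-!
The truncated sums are, up to sign, the coefficients of `Q(X) = ∏ (1 - X / m ^ (2 * k))` and of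
`1 / Q(X)`. Factoring `1 - X ^ k / m ^ (2 * k)` over the `k`-th roots of unity turns `Q(X ^ k)` into
a product of `k` rotated copies of `∏ (1 - X / m ^ 2)`, which by Euler's product converges
coefficientwise to the series of `sin (π √X) / (π √X)`. Multiplication and inversion of power series
are continuous coefficientwise, so both limits are read off at `X ^ (k * d)` from rotated products
of the series of `sinh √X / √X` and of its inverse, whose coefficients involve the Bernoulli
numbers. A rotated product is invariant under `X ↦ ζ_k X`, hence a series in `X ^ k`: this is the
vanishing of the remaining coefficients.
-/

section GapSums

/-- The tuples `(m_1, …, m_d)` in `{1, …, M}` whose entries increase by at least `s` from each to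
any later one: strictly increasing tuples for `s = 1`, weakly increasing ones for `s = 0`. -/
def gapTuples (s d M : ℕ) : Finset (Fin d → ℕ) :=
  (Fintype.piFinset fun _ : Fin d => Icc 1 M).filter fun m => ∀ i j : Fin d, i < j → m i + s ≤ m j

lemma mem_gapTuples_succ {s d M : ℕ} {m : Fin (d + 1) → ℕ} :
    m ∈ gapTuples s (d + 1) M ↔
      m (Fin.last d) ∈ Icc 1 M ∧ Fin.init m ∈ gapTuples s d (m (Fin.last d) - s) := by
  simp only [gapTuples, mem_filter, Fintype.mem_piFinset, mem_Icc, Fin.forall_fin_succ', Fin.init,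
    Fin.castSucc_lt_castSucc_iff, Fin.castSucc_lt_last, lt_irrefl, true_imp_iff, false_imp_iff,
    implies_true, and_true, Fin.not_lt.2 (Fin.le_last _)]
  constructor
  · rintro ⟨⟨hrange, hlast⟩, hgap⟩
    refine ⟨hlast, fun i => ⟨(hrange i).1, ?_⟩, fun i => (hgap i).1⟩
    have := (hgap i).2
    omega
  · rintro ⟨hlast, hrange, hgap⟩
    refine ⟨⟨fun i => ⟨(hrange i).1, ?_⟩, hlast⟩, fun i => ⟨hgap i, ?_⟩⟩ <;>
    · have := hrange i
      omega

variable {R : Type*}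

/-- The sum of the monomials `w (m_1) ⋯ w (m_d)` over `gapTuples s d M`, that is, the elementary
(`s = 1`) or complete homogeneous (`s = 0`) symmetric polynomial in `w 1, …, w M`. -/
def gapSum [CommSemiring R] (s : ℕ) (w : ℕ → R) (d M : ℕ) : R :=
  ∑ m ∈ gapTuples s d M, ∏ j, w (m j)

section Semiring

variable [CommSemiring R] (s : ℕ) (w : ℕ → R)

@[simp]
lemma gapSum_zero (M : ℕ) : gapSum s w 0 M = 1 := by
  simp [gapSum, gapTuples]

lemma gapSum_succ (d M : ℕ) :
    gapSum s w (d + 1) M = ∑ a ∈ Icc 1 M, w a * gapSum s w d (a - s) := by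
  simp only [gapSum, mul_sum]
  rw [sum_sigma']
  refine sum_nbij' (fun m => ⟨m (Fin.last d), Fin.init m⟩)
    (fun p => (Fin.snoc p.2 p.1 : Fin (d + 1) → ℕ)) (fun m hm => ?_) (fun p hp => ?_)
    (fun m _ => Fin.snoc_init_self m) (fun p _ => by simp) (fun m _ => ?_)
  · exact mem_sigma.2 (mem_gapTuples_succ.1 hm)
  · simpa [mem_gapTuples_succ] using hp
  · rw [Fin.prod_univ_castSucc, mul_comm]
    rfl

@[simp]
lemma gapSum_succ_zero (d : ℕ) : gapSum s w (d + 1) 0 = 0 := by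
  simp [gapSum_succ]

lemma gapSum_succ_succ (d M : ℕ) :
    gapSum s w (d + 1) (M + 1) =
      gapSum s w (d + 1) M + w (M + 1) * gapSum s w d (M + 1 - s) := by
  rw [gapSum_succ, sum_Icc_succ_top (by omega), ← gapSum_succ]

end Semiring

section Ring

open Polynomial

variable [CommRing R] (w : ℕ → R)

/-- The polynomial `(1 - w 1 * X) ⋯ (1 - w M * X)`. -/
def reciprocalPoly (M : ℕ) : R[X] :=
  ∏ j ∈ range M, (1 - C (w (j + 1)) * X)

lemma reciprocalPoly_succ (M : ℕ) :
    reciprocalPoly w (M + 1) = reciprocalPoly w M * (1 - C (w (M + 1)) * X) :=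
  prod_range_succ _ _

lemma coeff_reciprocalPoly (d M : ℕ) :
    (reciprocalPoly w M).coeff d = (-1) ^ d * gapSum 1 w d M := by
  induction M generalizing d with
  | zero => cases d <;> simp [reciprocalPoly, coeff_one]
  | succ M ih =>
    rw [reciprocalPoly_succ, mul_sub, mul_one, ← mul_assoc, coeff_sub]
    cases d with
    | zero => simp [ih]
    | succ d =>
      rw [coeff_mul_X, coeff_mul_C, ih, ih, gapSum_succ_succ, Nat.add_sub_cancel]
      ring

lemma mk_gapSum_mul_reciprocalPoly (M : ℕ) :
    PowerSeries.mk (fun d => gapSum 0 w d M) * (reciprocalPoly w M : PowerSeries R) = 1 := by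
  induction M with
  | zero =>
    ext d
    cases d <;> simp [reciprocalPoly, PowerSeries.coeff_one]
  | succ M ih =>
    have cancel_last : PowerSeries.mk (fun d => gapSum 0 w d (M + 1)) *
        (1 - PowerSeries.C (w (M + 1)) * PowerSeries.X) =
          PowerSeries.mk fun d => gapSum 0 w d M := by
      ext d
      rw [mul_sub, mul_one, ← mul_assoc, map_sub]
      cases d with
      | zero => simp
      | succ d =>
        simp only [PowerSeries.coeff_succ_mul_X, PowerSeries.coeff_mul_C, PowerSeries.coeff_mk,
          gapSum_succ_succ, Nat.sub_zero]
        ring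
    rw [reciprocalPoly_succ, ← ih, ← cancel_last]
    simp only [Polynomial.coe_mul, Polynomial.coe_sub, Polynomial.coe_one, Polynomial.coe_C,
      Polynomial.coe_X]
    ring

end Ring

lemma mzvSumLt_eq_gapSum (d κ M : ℕ) :
    mzvSumLt d κ M = gapSum 1 (fun m => 1 / (m : ℂ) ^ κ) d M := rfl

lemma mzvSumLe_eq_gapSum (d κ M : ℕ) :
    mzvSumLe d κ M = gapSum 0 (fun m => 1 / (m : ℂ) ^ κ) d M := rfl

end GapSums

section RotationProduct

open PowerSeries

variable {R : Type*}

section Semiring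

variable [CommSemiring R]

lemma rescale_C (c a : R) : rescale c (C a) = C a := by
  ext n
  cases n <;> simp [coeff_C]

/-- The product `∏ f(ζ^i * X)` over `1 ≤ i ≤ k`. For a primitive `k`-th root of unity `ζ` this is
the norm of `f` from power series in `X` down to power series in `X ^ k`. -/
def rotationProd (ζ : R) (k : ℕ) : R⟦X⟧ →* R⟦X⟧ :=
  ∏ i : Fin k, (rescale (ζ ^ ((i : ℕ) + 1)) : R⟦X⟧ →* R⟦X⟧)

lemma rotationProd_apply (ζ : R) (k : ℕ) (f : R⟦X⟧) :
    rotationProd ζ k f = ∏ i : Fin k, rescale (ζ ^ ((i : ℕ) + 1)) f := by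
  simp [rotationProd, MonoidHom.finsetProd_apply]

lemma coeff_rotationProd (ζ : R) (k n : ℕ) (f : R⟦X⟧) :
    coeff n (rotationProd ζ k f) = ∑ g ∈ Finset.Nat.antidiagonalTuple k n,
      (∏ i, coeff (g i) f) * ζ ^ (∑ i : Fin k, ((i : ℕ) + 1) * g i) := by
  rw [rotationProd_apply, coeff_prod]
  refine sum_nbij' (fun g => ⇑g) Finsupp.equivFunOnFinite.symm (fun g hg => ?_) (fun g hg => ?_)
    (fun g _ => Finsupp.equivFunOnFinite.symm_apply_apply g) (fun g _ => rfl) (fun g _ => ?_)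
  · exact Finset.Nat.mem_antidiagonalTuple.2 (mem_finsuppAntidiag.1 hg).1
  · exact mem_finsuppAntidiag.2 ⟨Finset.Nat.mem_antidiagonalTuple.1 hg, subset_univ _⟩
  · simp only [coeff_rescale, prod_mul_distrib, ← pow_mul, prod_pow_eq_pow_sum, mul_comm]

lemma rescale_rotationProd (ζ c : R) (k : ℕ) (f : R⟦X⟧) :
    rescale c (rotationProd ζ k f) = rotationProd ζ k (rescale c f) := by
  simp only [rotationProd_apply, map_prod, rescale_rescale, mul_comm c]

lemma rescale_rotationProd_self {ζ : R} {k : ℕ} (hζ : ζ ^ k = 1) (f : R⟦X⟧) :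
    rescale ζ (rotationProd ζ k f) = rotationProd ζ k f := by
  cases k with
  | zero => simp [rotationProd_apply]
  | succ k =>
    simp only [rotationProd_apply, map_prod, rescale_rescale, ← pow_succ]
    rw [Fin.prod_univ_castSucc, Fin.prod_univ_succ]
    simp [pow_succ, hζ, mul_comm]

section Topology

open scoped PowerSeries.WithPiTopology

variable [TopologicalSpace R] [IsTopologicalSemiring R]

lemma continuous_rescale (c : R) :
    Continuous (rescale c) := by
  refine continuous_iff_continuousAt.2 fun f =>
    (WithPiTopology.tendsto_iff_coeff_tendsto _ _ _ _).2 fun n => ?_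
  simp only [coeff_rescale]
  exact ((WithPiTopology.continuous_coeff R n).tendsto f).const_mul _

lemma continuous_rotationProd (ζ : R) (k : ℕ) : Continuous (rotationProd ζ k) := by
  rw [funext (rotationProd_apply ζ k)]
  exact continuous_finsetProd _ fun i _ => continuous_rescale _

end Topology

end Semiring

variable [CommRing R] [IsDomain R] {ζ : R} {k : ℕ}

lemma coeff_rotationProd_of_not_dvd (hζ : IsPrimitiveRoot ζ k) (f : R⟦X⟧) {n : ℕ} (hn : ¬ k ∣ n) :
    coeff n (rotationProd ζ k f) = 0 := by
  have invariant := congrArg (coeff n) (rescale_rotationProd_self hζ.pow_eq_one f)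
  rw [coeff_rescale, mul_left_eq_self₀, hζ.pow_eq_one_iff_dvd] at invariant
  exact invariant.resolve_left hn

lemma rotationProd_one_sub_C_mul_X (hk : k ≠ 0) (hζ : IsPrimitiveRoot ζ k) (a : R) :
    rotationProd ζ k (1 - C a * X) = expand k hk (1 - C (a ^ k) * X) := by
  have root_power : (C ζ * (C a * X)) ^ k = C (a ^ k) * X ^ k := by
    rw [mul_pow, mul_pow, ← map_pow, ← map_pow, hζ.pow_eq_one, map_one, one_mul]
  have factorization := congrArg (Polynomial.eval 1) (X_pow_sub_C_eq_prod
    (hζ.map_of_injective C_injective) (Nat.pos_of_ne_zero hk) root_power)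
  simp only [Polynomial.eval_sub, Polynomial.eval_pow, Polynomial.eval_X, Polynomial.eval_C,
    Polynomial.eval_prod, one_pow] at factorization
  rw [map_sub (expand k hk), map_one, map_mul, expand_C, expand_X, factorization,
    rotationProd_apply, ← Fin.prod_univ_eq_prod_range (fun i => 1 - C ζ ^ i * (C ζ * (C a * X)))]
  refine Fintype.prod_congr _ _ fun i => ?_
  simp only [map_sub, map_one, map_mul, rescale_C, rescale_X, map_pow]
  ring

lemma rotationProd_reciprocalPoly (hk : k ≠ 0) (hζ : IsPrimitiveRoot ζ k) (w : ℕ → R) (M : ℕ) :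
    rotationProd ζ k (reciprocalPoly w M) = expand k hk (reciprocalPoly (w ^ k) M : R⟦X⟧) := by
  induction M with
  | zero => simp [reciprocalPoly]
  | succ M ih =>
    simp only [reciprocalPoly_succ, Polynomial.coe_mul, Polynomial.coe_sub, Polynomial.coe_one,
      Polynomial.coe_C, Polynomial.coe_X, map_mul, ih, rotationProd_one_sub_C_mul_X hk hζ,
      Pi.pow_apply]

end RotationProduct

section SinhcSeries

open PowerSeries

lemma powerSeries_expand_injective {R : Type*} [CommRing R] {p : ℕ} (hp : p ≠ 0) :
    Function.Injective (expand (R := R) p hp) := fun f g h => by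
  ext n
  rw [← coeff_expand_mul p hp f, h, coeff_expand_mul]

variable (K : Type*) [Field K] [CharZero K]

/-- The power series of `sinh √X / √X`. -/
def sinhcSeries : K⟦X⟧ := mk fun n => 1 / ((2 * n + 1).factorial : K)

/-- The power series of `√X / sinh √X`. -/
def sinhcInvSeries : K⟦X⟧ :=
  mk fun n => -(((2 : K) ^ (2 * n) - 2) * (bernoulli' (2 * n) : K) / ((2 * n).factorial : K))

lemma two_mul_X_mul_expand_sinhcSeries :
    2 * X * expand 2 two_ne_zero (sinhcSeries K) = exp K - evalNegHom (exp K) := by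
  ext n
  rw [← map_ofNat C 2, mul_assoc, coeff_C_mul, map_sub, evalNegHom, coeff_rescale, coeff_exp]
  cases n with
  | zero => simp
  | succ n =>
    rw [coeff_succ_X_mul]
    rcases Nat.even_or_odd' n with ⟨m, rfl | rfl⟩
    · rw [coeff_expand_mul, Odd.neg_one_pow ⟨m, rfl⟩]
      simp [sinhcSeries, two_mul]
    · rw [coeff_expand_of_not_dvd _ _ _ (by omega), Even.neg_one_pow ⟨m + 1, by ring⟩]
      simp

lemma expand_sinhcInvSeries :
    expand 2 two_ne_zero (sinhcInvSeries K) =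
      2 * bernoulli'PowerSeries K - rescale (2 : K) (bernoulli'PowerSeries K) := by
  ext n
  rw [← map_ofNat C 2, map_sub, coeff_C_mul, coeff_rescale, bernoulli'PowerSeries, coeff_mk]
  rcases Nat.even_or_odd' n with ⟨m, rfl | rfl⟩
  · rw [coeff_expand_mul]
    simp only [sinhcInvSeries, coeff_mk, map_div₀, eq_ratCast, map_natCast]
    ring
  · rw [coeff_expand_of_not_dvd _ _ _ (by omega)]
    rcases Nat.eq_zero_or_pos m with rfl | hm
    · simp
    · simp [bernoulli'_eq_zero_of_odd ⟨m, rfl⟩ (by omega)]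

lemma rescale_two_bernoulli'PowerSeries_mul_exp_sq_sub_one :
    rescale (2 : K) (bernoulli'PowerSeries K) * (exp K ^ 2 - 1) = 2 * X * exp K ^ 2 := by
  have doubled := congrArg (rescale (2 : K)) (bernoulli'PowerSeries_mul_exp_sub_one K)
  have exp_sq : exp K ^ 2 = rescale (2 : K) (exp K) := by simp [exp_pow_eq_rescale_exp]
  rwa [map_mul, map_sub, map_one, map_mul, rescale_X, map_ofNat, ← exp_sq] at doubled

lemma expand_sinhcInvSeries_mul_expand_sinhcSeries :
    expand 2 two_ne_zero (sinhcInvSeries K) * expand 2 two_ne_zero (sinhcSeries K) = 1 := by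
  have exp_mul_neg := exp_mul_exp_neg_eq_one (A := K)
  have two_ne : (2 : K⟦X⟧) ≠ 0 := by
    rw [← map_ofNat C 2]
    exact (map_ne_zero_iff C C_injective).2 two_ne_zero
  apply mul_right_cancel₀
    (mul_ne_zero (mul_ne_zero two_ne X_ne_zero) (left_ne_zero_of_mul_eq_one exp_mul_neg))
  set E := exp K
  set B := bernoulli'PowerSeries K
  calc expand 2 two_ne_zero (sinhcInvSeries K) * expand 2 two_ne_zero (sinhcSeries K) * (2 * X * E)
      = expand 2 two_ne_zero (sinhcInvSeries K) *
          (2 * X * expand 2 two_ne_zero (sinhcSeries K) * E) := by ring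
    _ = (2 * B - rescale 2 B) * (E ^ 2 - E * evalNegHom E) := by
      rw [expand_sinhcInvSeries, two_mul_X_mul_expand_sinhcSeries]
      ring
    _ = 2 * (B * (E - 1)) * (E + 1) - rescale 2 B * (E ^ 2 - 1) := by
      rw [exp_mul_neg]
      ring
    _ = 2 * (X * E) * (E + 1) - 2 * X * E ^ 2 := by
      rw [bernoulli'PowerSeries_mul_exp_sub_one,
        rescale_two_bernoulli'PowerSeries_mul_exp_sq_sub_one]
    _ = 1 * (2 * X * E) := by ring

lemma sinhcInvSeries_mul_sinhcSeries : sinhcInvSeries K * sinhcSeries K = 1 :=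
  powerSeries_expand_injective two_ne_zero <| by
    rw [map_mul, map_one, expand_sinhcInvSeries_mul_expand_sinhcSeries]

end SinhcSeries

lemma multinomial_div_factorial_sum {ι K : Type*} [Field K] [CharZero K] (s : Finset ι)
    (f : ι → ℕ) :
    (Nat.multinomial s f : K) / ((∑ i ∈ s, f i).factorial : K) =
      ∏ i ∈ s, (1 / ((f i).factorial : K)) := by
  have factorials_ne_zero : ∏ i ∈ s, ((f i).factorial : K) ≠ 0 :=
    prod_ne_zero_iff.2 fun i _ => Nat.cast_ne_zero.2 (Nat.factorial_ne_zero _)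
  have sum_factorial_ne_zero : ((∑ i ∈ s, f i).factorial : K) ≠ 0 :=
    Nat.cast_ne_zero.2 (Nat.factorial_ne_zero _)
  have spec := congrArg (Nat.cast (R := K)) (Nat.multinomial_spec s f)
  push_cast at spec
  rw [prod_div_distrib, prod_const_one, div_eq_div_iff sum_factorial_ne_zero factorials_ne_zero,
    one_mul, mul_comm, spec]

section AlgebraicEvaluation

open PowerSeries

lemma coeff_rotationProd_sinhcSeries (k n : ℕ) :
    coeff n (rotationProd (Complex.exp (2 * Real.pi * I / k)) k (sinhcSeries ℂ)) =
      AbulletOne k n / ((2 * n + k).factorial : ℂ) := by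
  rw [coeff_rotationProd, AbulletOne, sum_div]
  refine sum_congr rfl fun f hf => ?_
  have total : ∑ i, (2 * f i + 1) = 2 * n + k := by
    simp [sum_add_distrib, ← mul_sum, Finset.Nat.mem_antidiagonalTuple.1 hf]
  simp only [sinhcSeries, coeff_mk]
  rw [← multinomial_div_factorial_sum, total, div_mul_eq_mul_div]

lemma coeff_rotationProd_sinhcInvSeries (k n : ℕ) :
    coeff n (rotationProd (Complex.exp (2 * Real.pi * I / k)) k (sinhcInvSeries ℂ)) =
      (-1) ^ k * AstarOne k n / ((2 * n).factorial : ℂ) := by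
  rw [coeff_rotationProd, AstarOne, mul_sum, sum_div]
  refine sum_congr rfl fun f hf => ?_
  have total : ∑ i, 2 * f i = 2 * n := by
    rw [← mul_sum, Finset.Nat.mem_antidiagonalTuple.1 hf]
  simp only [sinhcInvSeries, coeff_mk]
  rw [prod_neg, card_univ, Fintype.card_fin]
  simp only [div_eq_mul_one_div (_ * _ : ℂ) ((2 * f _).factorial : ℂ)]
  rw [prod_mul_distrib, ← multinomial_div_factorial_sum, total]
  ring

lemma AbulletOne_eq_zero_of_not_dvd {k n : ℕ} (hk : k ≠ 0) (hn : ¬ k ∣ n) : AbulletOne k n = 0 := by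
  have vanishing := coeff_rotationProd_of_not_dvd (isPrimitiveRoot_exp k hk) (sinhcSeries ℂ) hn
  rw [coeff_rotationProd_sinhcSeries] at vanishing
  simpa [Nat.factorial_ne_zero] using vanishing

lemma AstarOne_eq_zero_of_not_dvd {k n : ℕ} (hk : k ≠ 0) (hn : ¬ k ∣ n) : AstarOne k n = 0 := by
  have vanishing := coeff_rotationProd_of_not_dvd (isPrimitiveRoot_exp k hk) (sinhcInvSeries ℂ) hn
  rw [coeff_rotationProd_sinhcInvSeries] at vanishing
  simpa [Nat.factorial_ne_zero] using vanishing

end AlgebraicEvaluation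

section Continuity

open PowerSeries
open scoped PowerSeries.WithPiTopology

variable {K : Type*} [Field K] [TopologicalSpace K] [IsTopologicalDivisionRing K]

lemma continuousAt_powerSeries_inv {G : K⟦X⟧} (hG : constantCoeff G ≠ 0) :
    ContinuousAt (·⁻¹ : K⟦X⟧ → K⟦X⟧) G := by
  refine (WithPiTopology.tendsto_iff_coeff_tendsto _ _ _ _).2 fun n => ?_
  have coeff_continuousAt (m : ℕ) : Tendsto (coeff m) (𝓝 G) (𝓝 (coeff m G)) :=
    (WithPiTopology.continuous_coeff K m).tendsto G
  have inv_constantCoeff := ((WithPiTopology.continuous_constantCoeff K).tendsto G).inv₀ hG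
  induction n using Nat.strong_induction_on with
  | _ n ih =>
    simp only [coeff_inv n]
    split_ifs with hn
    · exact inv_constantCoeff
    · refine inv_constantCoeff.neg.mul (tendsto_finsetSum _ fun x _ => ?_)
      split_ifs with hx
      · exact (coeff_continuousAt _).mul (ih _ hx)
      · exact tendsto_const_nhds

lemma tendsto_powerSeries_of_mul_eq_one {ι : Type*} {l : Filter ι} {F H : ι → K⟦X⟧} {G T : K⟦X⟧}
    (hF : Tendsto F l (𝓝 G)) (hHF : ∀ i, H i * F i = 1) (hTG : T * G = 1) :
    Tendsto H l (𝓝 T) := by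
  have constantCoeff_ne_zero {A B : K⟦X⟧} (h : A * B = 1) : constantCoeff B ≠ 0 :=
    right_ne_zero_of_mul_eq_one (by rw [← map_mul, h, map_one])
  rw [(eq_inv_iff_mul_eq_one (constantCoeff_ne_zero hTG)).2 hTG,
    funext fun i => (eq_inv_iff_mul_eq_one (constantCoeff_ne_zero (hHF i))).2 (hHF i)]
  exact (continuousAt_powerSeries_inv (constantCoeff_ne_zero hTG)).tendsto.comp hF

end Continuity

section SineProduct

lemma tendstoLocallyUniformlyOn_eval_iterate_derivative {ι : Type*} {l : Filter ι} [l.NeBot]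
    {p : ι → Polynomial ℂ} {f : ℂ → ℂ} {U : Set ℂ} (hU : IsOpen U)
    (h : TendstoLocallyUniformlyOn (fun i z => (p i).eval z) f l U) (n : ℕ) :
    TendstoLocallyUniformlyOn (fun i z => (Polynomial.derivative^[n] (p i)).eval z)
      (iteratedDeriv n f) l U := by
  induction n with
  | zero => simpa only [iteratedDeriv_zero, Function.iterate_zero, id_eq] using h
  | succ n ih =>
    rw [iteratedDeriv_succ]
    refine (ih.deriv (.of_forall fun i => (Polynomial.differentiable _).differentiableOn) hU).congr
      fun i z _ => ?_
    rw [Function.comp_apply, Polynomial.deriv, Function.iterate_succ_apply']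

lemma tendsto_coeff_of_tendstoLocallyUniformlyOn {ι : Type*} {l : Filter ι} [l.NeBot]
    {p : ι → Polynomial ℂ} {f : ℂ → ℂ} {U : Set ℂ} (hU : IsOpen U) (hU₀ : 0 ∈ U)
    (h : TendstoLocallyUniformlyOn (fun i z => (p i).eval z) f l U) (n : ℕ) :
    Tendsto (fun i => (p i).coeff n) l (𝓝 (iteratedDeriv n f 0 / (n.factorial : ℂ))) := by
  have derivatives := tendstoLocallyUniformlyOn_eval_iterate_derivative hU h n
  refine ((derivatives.tendsto_at hU₀).div_const _).congr fun i => ?_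
  rw [← Polynomial.coeff_zero_eq_eval_zero, Polynomial.coeff_iterate_derivative, zero_add,
    Nat.descFactorial_self, nsmul_eq_mul,
    mul_div_cancel_left₀ _ (Nat.cast_ne_zero.2 n.factorial_ne_zero)]

lemma sin_pi_mul_eq_tprod (z : ℂ) :
    Complex.sin (Real.pi * z) = Real.pi * z * ∏' j, (1 + sineTerm z j) := by
  refine tendsto_nhds_unique (tendsto_euler_sin_prod z) ?_
  refine ((multipliable_sineTerm z).hasProd.tendsto_prod_nat.const_mul _).congr fun M => ?_
  simp only [sineTerm, neg_div, sub_eq_add_neg]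

lemma tendstoLocallyUniformlyOn_euler_sin_prod :
    TendstoLocallyUniformlyOn
      (fun (M : ℕ) (z : ℂ) => Real.pi * z * ∏ j ∈ range M, (1 + sineTerm z j))
      (fun z => Complex.sin (Real.pi * z)) atTop Set.univ := by
  have product : TendstoLocallyUniformlyOn (fun (M : ℕ) z => ∏ j ∈ range M, (1 + sineTerm z j))
      (fun z => ∏' j, (1 + sineTerm z j)) atTop Set.univ :=
    (hasProdLocallyUniformlyOn_of_forall_compact isOpen_univ fun _ _ hZ =>
      (multipliableUniformlyOn_euler_sin_prod_on_compact hZ).hasProdUniformlyOn)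
        |>.tendstoLocallyUniformlyOn_finsetRange
  have product_continuous : ContinuousOn (fun z => ∏' j, (1 + sineTerm z j)) Set.univ :=
    product.continuousOn (.of_forall fun M => by fun_prop)
  have linear : TendstoLocallyUniformlyOn (fun (_ : ℕ) (z : ℂ) => Real.pi * z)
      (fun z => Real.pi * z) atTop Set.univ := fun u hu z _ =>
    ⟨Set.univ, univ_mem, .of_forall fun _ _ _ => refl_mem_uniformity hu⟩
  simp only [sin_pi_mul_eq_tprod]
  exact linear.fun_mul₀ product (by fun_prop) product_continuous

lemma eval_expand_reciprocalPoly_inv_sq (M : ℕ) (z : ℂ) :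
    (Polynomial.expand ℂ 2 (reciprocalPoly (fun m => 1 / (m : ℂ) ^ 2) M)).eval z =
      ∏ j ∈ range M, (1 + sineTerm z j) := by
  simp only [reciprocalPoly, Polynomial.expand_eval, Polynomial.eval_prod, Polynomial.eval_sub,
    Polynomial.eval_mul, Polynomial.eval_one, Polynomial.eval_C, Polynomial.eval_X]
  refine prod_congr rfl fun j _ => ?_
  push_cast
  ring

lemma iteratedDeriv_sin_pi_mul_zero (n : ℕ) :
    iteratedDeriv (2 * n + 1) (fun z => Complex.sin (Real.pi * z)) 0 =
      Real.pi * (-(Real.pi : ℂ) ^ 2) ^ n := by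
  simp only [iteratedDeriv_comp_const_mul contDiff_sin, iteratedDeriv_odd_sin, Pi.mul_apply,
    Pi.pow_apply, Pi.neg_apply, Pi.one_apply, mul_zero, cos_zero]
  rw [neg_pow ((Real.pi : ℂ) ^ 2)]
  ring

lemma tendsto_coeff_reciprocalPoly_inv_sq (n : ℕ) :
    Tendsto (fun M => (reciprocalPoly (fun m => 1 / (m : ℂ) ^ 2) M).coeff n) atTop
      (𝓝 ((-(Real.pi : ℂ) ^ 2) ^ n / ((2 * n + 1).factorial : ℂ))) := by
  let sinePoly (M : ℕ) : Polynomial ℂ := Polynomial.C (Real.pi : ℂ) * Polynomial.X *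
    Polynomial.expand ℂ 2 (reciprocalPoly (fun m => 1 / (m : ℂ) ^ 2) M)
  have coeff_sinePoly (M : ℕ) : (sinePoly M).coeff (2 * n + 1) =
      Real.pi * (reciprocalPoly (fun m => 1 / (m : ℂ) ^ 2) M).coeff n := by
    simp only [sinePoly, mul_assoc, Polynomial.coeff_C_mul, Polynomial.coeff_X_mul, mul_comm 2 n,
      Polynomial.coeff_expand_mul two_pos]
  have sinePoly_tendsto : TendstoLocallyUniformlyOn (fun M z => (sinePoly M).eval z)
      (fun z => Complex.sin (Real.pi * z)) atTop Set.univ := by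
    simpa only [sinePoly, Polynomial.eval_mul, Polynomial.eval_C, Polynomial.eval_X,
      eval_expand_reciprocalPoly_inv_sq] using tendstoLocallyUniformlyOn_euler_sin_prod
  have limit := tendsto_coeff_of_tendstoLocallyUniformlyOn isOpen_univ (Set.mem_univ 0)
    sinePoly_tendsto (2 * n + 1)
  have pi_ne_zero : (Real.pi : ℂ) ≠ 0 := ofReal_ne_zero.2 Real.pi_ne_zero
  rw [iteratedDeriv_sin_pi_mul_zero, mul_div_assoc] at limit
  simpa only [coeff_sinePoly, inv_mul_cancel_left₀ pi_ne_zero] using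
    limit.const_mul (Real.pi : ℂ)⁻¹

end SineProduct

section Limits

open PowerSeries
open scoped PowerSeries.WithPiTopology

lemma tendsto_reciprocalPoly_inv_sq :
    Tendsto (fun M => (reciprocalPoly (fun m => 1 / (m : ℂ) ^ 2) M : ℂ⟦X⟧)) atTop
      (𝓝 (rescale (-(Real.pi : ℂ) ^ 2) (sinhcSeries ℂ))) := by
  refine (WithPiTopology.tendsto_iff_coeff_tendsto _ _ _ _).2 fun n => ?_
  simpa [sinhcSeries, div_eq_mul_inv] using tendsto_coeff_reciprocalPoly_inv_sq n

variable {k : ℕ}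

lemma tendsto_expand_reciprocalPoly (hk : k ≠ 0) :
    Tendsto (fun M => expand k hk (reciprocalPoly (fun m => 1 / (m : ℂ) ^ (2 * k)) M : ℂ⟦X⟧)) atTop
      (𝓝 (rescale (-(Real.pi : ℂ) ^ 2)
        (rotationProd (Complex.exp (2 * Real.pi * I / k)) k (sinhcSeries ℂ)))) := by
  have weight_pow : (fun m : ℕ => 1 / (m : ℂ) ^ (2 * k)) = (fun m : ℕ => 1 / (m : ℂ) ^ 2) ^ k := by
    ext m
    simp [pow_mul]
  simp only [weight_pow, rescale_rotationProd,
    ← rotationProd_reciprocalPoly hk (isPrimitiveRoot_exp k hk)]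
  exact ((continuous_rotationProd _ k).tendsto _).comp tendsto_reciprocalPoly_inv_sq

lemma tendsto_expand_mzvSumLe (hk : k ≠ 0) :
    Tendsto (fun M => expand k hk (mk fun d => mzvSumLe d (2 * k) M)) atTop
      (𝓝 (rescale (-(Real.pi : ℂ) ^ 2)
        (rotationProd (Complex.exp (2 * Real.pi * I / k)) k (sinhcInvSeries ℂ)))) := by
  refine tendsto_powerSeries_of_mul_eq_one (tendsto_expand_reciprocalPoly hk) (fun M => ?_) ?_
  · simp only [mzvSumLe_eq_gapSum]
    rw [← map_mul, mk_gapSum_mul_reciprocalPoly, map_one]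
  · rw [← map_mul, ← map_mul, sinhcInvSeries_mul_sinhcSeries, map_one, map_one]

lemma tendsto_mzvSumLt_s12 (hk : k ≠ 0) (d : ℕ) :
    Tendsto (mzvSumLt d (2 * k)) atTop
      (𝓝 ((-1 : ℂ) ^ d * ((-(Real.pi : ℂ) ^ 2) ^ (k * d) *
        (AbulletOne k (k * d) / ((2 * (k * d) + k).factorial : ℂ))))) := by
  have limit := (WithPiTopology.tendsto_iff_coeff_tendsto _ _ _ _).1
    (tendsto_expand_reciprocalPoly hk) (k * d)
  simp only [coeff_expand_mul, Polynomial.coeff_coe, coeff_reciprocalPoly, coeff_rescale,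
    coeff_rotationProd_sinhcSeries, ← mzvSumLt_eq_gapSum] at limit
  refine (limit.const_mul ((-1) ^ d)).congr fun M => ?_
  rw [← mul_assoc, ← mul_pow, neg_one_mul, neg_neg, one_pow, one_mul]

lemma tendsto_mzvSumLe_s12 (hk : k ≠ 0) (d : ℕ) :
    Tendsto (mzvSumLe d (2 * k)) atTop
      (𝓝 ((-(Real.pi : ℂ) ^ 2) ^ (k * d) *
        ((-1) ^ k * AstarOne k (k * d) / ((2 * (k * d)).factorial : ℂ)))) := by
  have limit := (WithPiTopology.tendsto_iff_coeff_tendsto _ _ _ _).1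
    (tendsto_expand_mzvSumLe hk) (k * d)
  simpa only [coeff_expand_mul, coeff_mk, coeff_rescale, coeff_rotationProd_sinhcInvSeries]
    using limit

end Limits

/-- **Theorem 3.4 for the trivial character**: (a) `A^ω_{2n}(2k,1) = 0` when `k ∤ n`;
(b) `ζ^•_d({2k}^d) = (-1)^d (-1)^{kd} A^•_{2kd}(2k,1) π^{2kd}/((2d+1)k)!`;
(c) `ζ^★_d({2k}^d) = (-1)^{k(d-1)} A^★_{2kd}(2k,1) π^{2kd}/(2kd)!`,
the multiple zeta values being expressed as limits of their truncations. -/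
theorem multiple_zeta_value_eval_II (k d : ℕ) (hk : 1 ≤ k) (hd : 1 ≤ d) :
    (∀ n : ℕ, ¬ k ∣ n → AbulletOne k n = 0 ∧ AstarOne k n = 0) ∧
    Tendsto (mzvSumLt d (2 * k)) atTop
      (𝓝 ((-1 : ℂ) ^ d * (-1 : ℂ) ^ (k * d) * AbulletOne k (k * d) *
        (Real.pi : ℂ) ^ (2 * k * d) / (((2 * d + 1) * k).factorial : ℂ))) ∧
    Tendsto (mzvSumLe d (2 * k)) atTop
      (𝓝 ((-1 : ℂ) ^ (k * (d - 1)) * AstarOne k (k * d) *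
        (Real.pi : ℂ) ^ (2 * k * d) / ((2 * k * d).factorial : ℂ))) := by
  have hk₀ : k ≠ 0 := Nat.one_le_iff_ne_zero.1 hk
  refine ⟨fun n hn => ⟨AbulletOne_eq_zero_of_not_dvd hk₀ hn, AstarOne_eq_zero_of_not_dvd hk₀ hn⟩,
    ?_, ?_⟩
  · convert tendsto_mzvSumLt_s12 hk₀ d using 2
    rw [neg_pow ((Real.pi : ℂ) ^ 2), ← pow_mul, mul_assoc 2 k d,
      show (2 * d + 1) * k = 2 * (k * d) + k by ring]
    ring
  · have sign : (-1 : ℂ) ^ (k * (d - 1)) = (-1) ^ (k * d) * (-1) ^ k := by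
      obtain ⟨e, rfl⟩ := Nat.exists_eq_add_of_le' hd
      rw [Nat.add_sub_cancel, mul_add_one, pow_add, mul_assoc, ← mul_pow]
      norm_num
    convert tendsto_mzvSumLe_s12 hk₀ d using 2
    rw [sign, neg_pow ((Real.pi : ℂ) ^ 2), ← pow_mul, mul_assoc 2 k d]
    ring

end
end
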